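/- Let q ≡ 3 (mod 4) be a prime power and let a ∈ F_q be such that a ≠ −1, 0, 1, the elements a, a+1, a−1, a²+1, a³+a²−1 are squares in F_q, and the elements a²−a+1, a²+a+1, a²+a−1 are non-squares in F_q. Write L := L_{a,a²}. Then for every non-square η ∈ F_q, no triple of the form (0, η, z) is associative: for every z ∈ F_q, L(L(0,η), z) ≠ L(0, L(η,z)). -/

import Mathlib

open scoped Classical

/-!
Multiplication by a nonzero square is an automorphism of `L_{a,b}`. Since `-η` is a square, this
carries the triple `(0, η, z)` to `(0, -1, t)`. For `L_{a,a²}` associativity of the latter is a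
linear equation in `t`, one for each choice of the quadratic characters of `t + a²`, `t + 1` and
`L(-1, t)`. Each of the eight equations either has no solution or has one that contradicts the
chosen characters.
-/

theorem isSquare_mul_iff_right {G : Type*} [CommGroupWithZero G] {c : G} (hc : IsSquare c)
    (hc0 : c ≠ 0) (x : G) : IsSquare (c * x) ↔ IsSquare x :=
  ⟨fun h => mul_div_cancel_left₀ x hc0 ▸ h.div hc, hc.mul⟩

theorem isSquare_mul_of_not_isSquare {F : Type*} [Field F] [Finite F] {x y : F}
    (hx : ¬ IsSquare x) (hy : ¬ IsSquare y) : IsSquare (x * y) := by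
  have := Fintype.ofFinite F
  have hx0 : x ≠ 0 := fun h => hx (h ▸ IsSquare.zero)
  have hy0 : y ≠ 0 := fun h => hy (h ▸ IsSquare.zero)
  rw [← quadraticChar_one_iff_isSquare (mul_ne_zero hx0 hy0), map_mul,
    quadraticChar_neg_one_iff_not_isSquare.mpr hx, quadraticChar_neg_one_iff_not_isSquare.mpr hy,
    neg_mul_neg, one_mul]

theorem isSquare_neg_of_card_mod_four_eq_three {F : Type*} [Field F] [Fintype F]
    (hF : Fintype.card F % 4 = 3) {x : F} (hx : ¬ IsSquare x) : IsSquare (-x) := by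
  have hneg : ¬ IsSquare (-1 : F) := fun h => FiniteField.isSquare_neg_one_iff.mp h hF
  exact neg_one_mul x ▸ isSquare_mul_of_not_isSquare hneg hx

/-- The operation `L_{a,b}`, defined over any ring. Taking `a` and `b` as parameters lets its
automorphisms be studied apart from the choice `b = a²`. -/
noncomputable def quadraticOp {R : Type*} [Ring R] (a b x y : R) : R :=
  if IsSquare (y - x) then x + a * (y - x) else x + b * (y - x)

theorem quadraticOp_zero_left {R : Type*} [Ring R] (a b y : R) :
    quadraticOp a b 0 y = if IsSquare y then a * y else b * y := by
  simp only [quadraticOp, sub_zero, zero_add]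

theorem quadraticOp_neg_left {R : Type*} [Ring R] (a b x y : R) :
    quadraticOp a b (-x) y = if IsSquare (y + x) then -x + a * (y + x) else -x + b * (y + x) := by
  simp only [quadraticOp, sub_neg_eq_add]

theorem quadraticOp_mul_mul {F : Type*} [Field F] {c : F} (hc : IsSquare c) (hc0 : c ≠ 0)
    (a b x y : F) : quadraticOp a b (c * x) (c * y) = c * quadraticOp a b x y := by
  simp only [quadraticOp, ← mul_sub, isSquare_mul_iff_right hc hc0]
  split_ifs <;> ring

section NegOne

variable {F : Type*} [Field F] {a t : F}

theorem quadraticOp_neg_sq_ne_of_isSquare_of_isSquare (ha0 : a ≠ 0) (ha1 : a ≠ 1)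
    (ha_neg1 : a ≠ -1)
    (hsub : IsSquare (a - 1)) (hquad : ¬ IsSquare (a ^ 2 + a - 1))
    (hu : IsSquare (t + a ^ 2)) (hv : IsSquare (t + 1)) :
    quadraticOp a (a ^ 2) (-a ^ 2) t ≠
      quadraticOp a (a ^ 2) 0 (quadraticOp a (a ^ 2) (-1) t) := by
  intro h
  have hk : a * (a - 1) ≠ 0 := mul_ne_zero ha0 (sub_ne_zero.mpr ha1)
  simp only [quadraticOp_neg_left, quadraticOp_zero_left, if_pos hu, if_pos hv] at h
  split_ifs at h with hw
  · have ht : t = a - 1 := mul_left_cancel₀ hk (by linear_combination -h)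
    refine hquad ?_
    rwa [ht, show a - 1 + a ^ 2 = a ^ 2 + a - 1 by ring] at hu
  · have ha_add : a + 1 ≠ 0 := fun h0 => ha_neg1 (eq_neg_of_add_eq_zero_left h0)
    have ht : t = 0 := mul_left_cancel₀ (mul_ne_zero hk ha_add) (by linear_combination -h)
    refine hw ?_
    rwa [ht, show -1 + a * (0 + 1) = a - 1 by ring]

theorem quadraticOp_neg_sq_ne_of_isSquare_of_not_isSquare (ha0 : a ≠ 0) (ha1 : a ≠ 1)
    (ha_neg1 : a ≠ -1)
    (ha : IsSquare a) (hadd : IsSquare (a + 1)) (hquad : ¬ IsSquare (a ^ 2 + a + 1))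
    (hu : IsSquare (t + a ^ 2)) (hv : ¬ IsSquare (t + 1)) :
    quadraticOp a (a ^ 2) (-a ^ 2) t ≠
      quadraticOp a (a ^ 2) 0 (quadraticOp a (a ^ 2) (-1) t) := by
  intro h
  have hk : a * (a - 1) ≠ 0 := mul_ne_zero ha0 (sub_ne_zero.mpr ha1)
  have ha_add : a + 1 ≠ 0 := fun h0 => ha_neg1 (eq_neg_of_add_eq_zero_left h0)
  simp only [quadraticOp_neg_left, quadraticOp_zero_left, if_pos hu, if_neg hv] at h
  split_ifs at h with hw
  · have ht : (a + 1) * (t + 1) = a := mul_left_cancel₀ hk (by linear_combination -h)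
    exact hv ((isSquare_mul_iff_right hadd ha_add _).mp (ht.symm ▸ ha))
  · have ht : (t + a ^ 2) * (a ^ 2 + a + 1) = a ^ 3 * (a + 1) :=
      mul_left_cancel₀ hk (by linear_combination -h)
    have hu0 : t + a ^ 2 ≠ 0 :=
      left_ne_zero_of_mul (ht.symm ▸ mul_ne_zero (pow_ne_zero 3 ha0) ha_add)
    exact hquad ((isSquare_mul_iff_right hu hu0 _).mp (ht.symm ▸ (ha.pow 3).mul hadd))

theorem quadraticOp_neg_sq_ne_of_not_isSquare_of_isSquare (ha0 : a ≠ 0) (ha1 : a ≠ 1)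
    (ha : IsSquare a) (hadd : IsSquare (a + 1)) (hquad : a ^ 2 + a - 1 ≠ 0)
    (hu : ¬ IsSquare (t + a ^ 2)) (hv : IsSquare (t + 1)) :
    quadraticOp a (a ^ 2) (-a ^ 2) t ≠
      quadraticOp a (a ^ 2) 0 (quadraticOp a (a ^ 2) (-1) t) := by
  intro h
  have hk : a * (a - 1) ≠ 0 := mul_ne_zero ha0 (sub_ne_zero.mpr ha1)
  simp only [quadraticOp_neg_left, quadraticOp_zero_left, if_neg hu, if_pos hv] at h
  split_ifs at h with hw
  · exact mul_ne_zero hk hquad (by linear_combination h)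
  · have ht : t = a := mul_left_cancel₀ (mul_ne_zero ha0 hk) (by linear_combination -h)
    refine hu ?_
    rw [ht, show a + a ^ 2 = a * (a + 1) by ring]
    exact ha.mul hadd

theorem quadraticOp_neg_sq_ne_of_not_isSquare_of_not_isSquare (ha0 : a ≠ 0) (ha1 : a ≠ 1)
    (ha_neg1 : a ≠ -1) (ha : IsSquare a) (hcubic : IsSquare (a ^ 3 + a ^ 2 - 1))
    (hu : ¬ IsSquare (t + a ^ 2)) (hv : ¬ IsSquare (t + 1)) :
    quadraticOp a (a ^ 2) (-a ^ 2) t ≠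
      quadraticOp a (a ^ 2) 0 (quadraticOp a (a ^ 2) (-1) t) := by
  intro h
  have hk : a * (a - 1) ≠ 0 := mul_ne_zero ha0 (sub_ne_zero.mpr ha1)
  simp only [quadraticOp_neg_left, quadraticOp_zero_left, if_neg hu, if_neg hv] at h
  split_ifs at h with hw
  · have ht : a * (t + a ^ 2) = a ^ 3 + a ^ 2 - 1 :=
      mul_left_cancel₀ hk (by linear_combination -h)
    exact hu ((isSquare_mul_iff_right ha ha0 _).mp (ht.symm ▸ hcubic))
  · have ha_add : a + 1 ≠ 0 := fun h0 => ha_neg1 (eq_neg_of_add_eq_zero_left h0)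
    have ht : t = 0 := mul_left_cancel₀ (mul_ne_zero ha0 (mul_ne_zero hk ha_add))
      (by linear_combination -h)
    refine hv ?_
    rw [ht, zero_add]
    exact IsSquare.one

theorem quadraticOp_not_assoc_zero_neg_one (hneg : ¬ IsSquare (-1 : F))
    (ha : IsSquare a) (hadd : IsSquare (a + 1)) (hsub : IsSquare (a - 1))
    (hcubic : IsSquare (a ^ 3 + a ^ 2 - 1)) (hplus : ¬ IsSquare (a ^ 2 + a + 1))
    (hminus : ¬ IsSquare (a ^ 2 + a - 1)) (t : F) :
    quadraticOp a (a ^ 2) (quadraticOp a (a ^ 2) 0 (-1)) t ≠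
      quadraticOp a (a ^ 2) 0 (quadraticOp a (a ^ 2) (-1) t) := by
  have ha0 : a ≠ 0 := fun h => hneg (by simpa only [h, zero_sub] using hsub)
  have ha1 : a ≠ 1 := fun h => hminus (by simp [h])
  have ha_neg1 : a ≠ -1 := fun h => hneg (h ▸ ha)
  have hminus0 : a ^ 2 + a - 1 ≠ 0 := fun h => hminus (h ▸ IsSquare.zero)
  rw [quadraticOp_zero_left a _ (-1), if_neg hneg, mul_neg_one]
  by_cases hu : IsSquare (t + a ^ 2) <;> by_cases hv : IsSquare (t + 1)
  · exact quadraticOp_neg_sq_ne_of_isSquare_of_isSquare ha0 ha1 ha_neg1 hsub hminus hu hv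
  · exact quadraticOp_neg_sq_ne_of_isSquare_of_not_isSquare ha0 ha1 ha_neg1 ha hadd hplus hu hv
  · exact quadraticOp_neg_sq_ne_of_not_isSquare_of_isSquare ha0 ha1 ha hadd hminus0 hu hv
  · exact quadraticOp_neg_sq_ne_of_not_isSquare_of_not_isSquare ha0 ha1 ha_neg1 ha hcubic hu hv

end NegOne

theorem Laa2_no_assoc_0ηz_q3mod4_general {F : Type*} [Field F] {a η : F}
    (ha : IsSquare a) (hadd : IsSquare (a + 1)) (hsub : IsSquare (a - 1))
    (hcubic : IsSquare (a ^ 3 + a ^ 2 - 1)) (hplus : ¬ IsSquare (a ^ 2 + a + 1))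
    (hminus : ¬ IsSquare (a ^ 2 + a - 1)) (hη : ¬ IsSquare η) (hη_neg : IsSquare (-η)) (z : F) :
    quadraticOp a (a ^ 2) (quadraticOp a (a ^ 2) 0 η) z ≠
      quadraticOp a (a ^ 2) 0 (quadraticOp a (a ^ 2) η z) := by
  obtain ⟨c, rfl⟩ : ∃ c, η = -c := ⟨-η, (neg_neg η).symm⟩
  rw [neg_neg] at hη_neg
  have hc0 : c ≠ 0 := fun h => hη (by simp only [h, neg_zero, IsSquare.zero])
  have hneg : ¬ IsSquare (-1 : F) := fun h => hη (mul_neg_one c ▸ hη_neg.mul h)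
  obtain ⟨t, rfl⟩ : ∃ t, z = c * t := ⟨z / c, (mul_div_cancel₀ z hc0).symm⟩
  rw [← mul_neg_one c, ← mul_zero c]
  simp only [quadraticOp_mul_mul hη_neg hc0]
  exact (mul_right_injective₀ hc0).ne
    (quadraticOp_not_assoc_zero_neg_one hneg ha hadd hsub hcubic hplus hminus t)

/-- Case `q ≡ 3 (mod 4)`: no triple `(0, η, z)` with `η` a non-square is associative for `L_{a,a²}`. -/
theorem Laa2_no_assoc_0ηz_q3mod4 (F : Type*) [Field F] [Fintype F]
    (q : ℕ) (hq : Fintype.card F = q) (h4 : q % 4 = 3)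
    (a : F) (ha1 : a ≠ -1) (ha2 : a ≠ 0) (ha3 : a ≠ 1)
    (hs1 : IsSquare a) (hs2 : IsSquare (a + 1)) (hs3 : IsSquare (a - 1))
    (hs4 : IsSquare (a ^ 2 + 1)) (hs5 : IsSquare (a ^ 3 + a ^ 2 - 1))
    (hn1 : ¬ IsSquare (a ^ 2 - a + 1)) (hn2 : ¬ IsSquare (a ^ 2 + a + 1))
    (hn3 : ¬ IsSquare (a ^ 2 + a - 1))
    (L : F → F → F)
    (hL : ∀ x y : F,
      L x y = if IsSquare (y - x) then x + a * (y - x) else x + a ^ 2 * (y - x)) :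
    ∀ η : F, ¬ IsSquare η → ∀ z : F, L (L 0 η) z ≠ L 0 (L η z) := by
  -- The two sides decide `IsSquare` by different instances, hence `congr`.
  obtain rfl : L = quadraticOp a (a ^ 2) := funext₂ fun x y => by rw [hL, quadraticOp]; congr
  exact fun η hη => Laa2_no_assoc_0ηz_q3mod4_general hs1 hs2 hs3 hs5 hn2 hn3 hη
    (isSquare_neg_of_card_mod_four_eq_three (hq ▸ h4) hη)
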